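/- (Safety direction of the soundness of GPDR, Theorem 1.) If the configuration ⟨M ∣ R₀,…,R_N; N⟩ is consistent and there exists i with 1 ≤ i < N such that for all q and σ, R_i q σ implies R_{i−1} q σ, then R_{i−1} is an inductive invariant for (DTSTS, φP). -/

import Mathlib

/-- The jump transition `⟨q, σ₁⟩ →δ ⟨q', σ₂⟩` of a DTSTS. -/
def Jump {Q V : Type*}
    (δ : Set (Q × ((V → ℝ) → Prop) × ((V → ℝ) → (V → ℝ) → Prop) × Q))
    (q : Q) (σ₁ : V → ℝ) (q' : Q) (σ₂ : V → ℝ) : Prop :=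
  ∃ φ φc, (q, φ, φc, q') ∈ δ ∧ φ σ₁ ∧ φc σ₁ σ₂

/-- The forward predicate transformer of the DTSTS `(Q, q₀, φ₀, δ)`. -/
def FTrans {Q V : Type*} (q₀ : Q) (φ₀ : (V → ℝ) → Prop)
    (δ : Set (Q × ((V → ℝ) → Prop) × ((V → ℝ) → (V → ℝ) → Prop) × Q))
    (R : Q → (V → ℝ) → Prop) : Q → (V → ℝ) → Prop :=
  fun q' σ₂ => (q' = q₀ ∧ φ₀ σ₂) ∨
    ∃ q φ φc σ₁, (q, φ, φc, q') ∈ δ ∧ R q σ₁ ∧ φ σ₁ ∧ φc σ₁ σ₂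

/-- Consistency of a GPDR configuration `⟨M ∣ R₀,…,R_N; N⟩` (Definition 8).
Frames are given as `R : ℕ → Q → (V → ℝ) → Prop` (only indices `≤ N` matter),
and the trace `M` is a list of triples `(σ, q, i)`. -/
structure Consistent {Q V : Type*} (q₀ : Q) (φ₀ : (V → ℝ) → Prop)
    (δ : Set (Q × ((V → ℝ) → Prop) × ((V → ℝ) → (V → ℝ) → Prop) × Q))
    (φP : (V → ℝ) → Prop)
    (R : ℕ → Q → (V → ℝ) → Prop) (N : ℕ)
    (M : List ((V → ℝ) × Q × ℕ)) : Prop where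
  /-- (Con-A): `R₀` at `q₀` is the initial condition… -/
  conA₁ : ∀ σ, R 0 q₀ σ ↔ φ₀ σ
  /-- (Con-A): …and is `False` at other locations. -/
  conA₂ : ∀ q, q ≠ q₀ → ∀ σ, ¬ R 0 q σ
  /-- (Con-B): the frames are increasing. -/
  conB : ∀ i, i < N → ∀ q σ, R i q σ → R (i + 1) q σ
  /-- (Con-C): frames below `N` are safe. -/
  conC : ∀ i, i < N → ∀ q σ, R i q σ → φP σ
  /-- (Con-D): frames are closed under the forward predicate transformer. -/
  conD : ∀ i, i < N → ∀ q σ, FTrans q₀ φ₀ δ (R i) q σ → R (i + 1) q σ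
  /-- (Con-E): level-`N` trace entries are in `R_N` and violate safety. -/
  conE : ∀ σ q, (σ, q, N) ∈ M → R N q σ ∧ ¬ φP σ
  /-- (Con-F): consecutive trace entries are connected by a transition. -/
  conF : ∀ k i (σ₁ : V → ℝ) (q₁ : Q) (σ₂ : V → ℝ) (q₂ : Q), i < N →
    M[k]? = some (σ₁, q₁, i) → M[k + 1]? = some (σ₂, q₂, i + 1) →
    ∃ φ φc, (q₁, φ, φc, q₂) ∈ δ ∧ R i q₁ σ₁ ∧ φ σ₁ ∧ φc σ₁ σ₂

/-- `Rel` is an inductive invariant for the DTSTS `(Q, q₀, φ₀, δ)` and safety predicate `φP`. -/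
def IndInv {Q V : Type*} (q₀ : Q) (φ₀ : (V → ℝ) → Prop)
    (δ : Set (Q × ((V → ℝ) → Prop) × ((V → ℝ) → (V → ℝ) → Prop) × Q))
    (φP : (V → ℝ) → Prop) (Rel : Q → (V → ℝ) → Prop) : Prop :=
  (∀ σ, φ₀ σ → Rel q₀ σ) ∧
  (∀ q σ q' σ', Rel q σ → Jump δ q σ q' σ' → Rel q' σ') ∧
  (∀ q σ, Rel q σ → φP σ)

section

variable {Q V : Type*} {q₀ : Q} {φ₀ : (V → ℝ) → Prop}
  {δ : Set (Q × ((V → ℝ) → Prop) × ((V → ℝ) → (V → ℝ) → Prop) × Q)} {φP : (V → ℝ) → Prop}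

theorem fTrans_le_iff {R S : Q → (V → ℝ) → Prop} :
    FTrans q₀ φ₀ δ R ≤ S ↔
      (∀ σ, φ₀ σ → S q₀ σ) ∧ ∀ q σ q' σ', R q σ → Jump δ q σ q' σ' → S q' σ' := by
  constructor
  · intro hle
    refine ⟨fun σ hσ => hle q₀ σ (Or.inl ⟨rfl, hσ⟩), ?_⟩
    rintro q σ q' σ' hR ⟨φ, φc, hmem, hguard, hcmd⟩
    exact hle q' σ' (Or.inr ⟨q, φ, φc, σ, hmem, hR, hguard, hcmd⟩)
  · rintro ⟨hinit, hstep⟩ q' σ' (⟨rfl, hσ'⟩ | ⟨q, φ, φc, σ, hmem, hR, hguard, hcmd⟩)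
    · exact hinit σ' hσ'
    · exact hstep q σ q' σ' hR ⟨φ, φc, hmem, hguard, hcmd⟩

theorem indInv_iff_fTrans_le {R : Q → (V → ℝ) → Prop} :
    IndInv q₀ φ₀ δ φP R ↔ FTrans q₀ φ₀ δ R ≤ R ∧ ∀ q σ, R q σ → φP σ := by
  rw [IndInv, fTrans_le_iff, and_assoc]

theorem gpdr_valid_sound_general {R : ℕ → Q → (V → ℝ) → Prop} {N : ℕ}
    {M : List ((V → ℝ) × Q × ℕ)} (hcons : Consistent q₀ φ₀ δ φP R N M)
    {i : ℕ} (hi : i < N) (hfix : R (i + 1) ≤ R i) :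
    IndInv q₀ φ₀ δ φP (R i) := by
  have hclosed : FTrans q₀ φ₀ δ (R i) ≤ R i :=
    calc FTrans q₀ φ₀ δ (R i) ≤ R (i + 1) := hcons.conD i hi
      _ ≤ R i := hfix
  exact indInv_iff_fTrans_le.2 ⟨hclosed, hcons.conC i hi⟩

end

/-- Safety direction of the soundness of GPDR (Theorem 1). -/
theorem gpdr_valid_sound {Q V : Type*} [Fintype V]
    (q₀ : Q) (φ₀ : (V → ℝ) → Prop)
    (δ : Set (Q × ((V → ℝ) → Prop) × ((V → ℝ) → (V → ℝ) → Prop) × Q))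
    (φP : (V → ℝ) → Prop)
    (R : ℕ → Q → (V → ℝ) → Prop) (N : ℕ)
    (M : List ((V → ℝ) × Q × ℕ))
    (hcons : Consistent q₀ φ₀ δ φP R N M)
    (i : ℕ) (h1 : 1 ≤ i) (h2 : i < N)
    (hfix : ∀ q σ, R i q σ → R (i - 1) q σ) :
    IndInv q₀ φ₀ δ φP (R (i - 1)) := by
  obtain ⟨j, rfl⟩ := Nat.exists_eq_add_of_le' h1
  exact gpdr_valid_sound_general hcons (Nat.lt_of_succ_lt h2) hfix
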